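/- arXiv:2112.15462 — 2 statements merged into one kernel-verified Lean document; each statement's English description precedes it below -/
import Mathlib

section
/- Let A, B ⊆ [m] with A∩B ≠ ∅ and |A\B| = |B\A| = 1 (so |A| = |B| ≥ 2), Δ = Δ_A ∪ Δ_B, and D = Δ + wΔ ⊆ F_4^m. Then C_{D^*} has length 9·2^{2|A|−2} − 1, exactly 4^{|A|+1} distinct codewords, and the multiset {wt(c_{D^*}(x)) : x ∈ F_4^m} is obtained from the following weight–multiplicity pairs, each multiplicity multiplied by 4^{m−|A|−1}: weight 0, multiplicity 1; weight 5·2^{2|A|−2}, multiplicity 6; weight 2^{2|A|+1}, multiplicity 3; weight 7·2^{2|A|−2}, multiplicity 6; weight 27·2^{2|A|−4}, multiplicity 4^{|A|+1} − 16. In particular C_{D^*} is a four-weight quaternary code. -/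
open Finset

/-- The support of a binary vector, as a finset of coordinates. -/
def supp {m : ℕ} (v : Fin m → ZMod 2) : Finset (Fin m) :=
  Finset.univ.filter (fun i => v i ≠ 0)

/-- The simplicial complex generated by `A`: all binary vectors with support contained in `A`. -/
def delta {m : ℕ} (A : Finset (Fin m)) : Finset (Fin m → ZMod 2) :=
  Finset.univ.filter (fun v => supp v ⊆ A)

variable {F : Type} [Field F] [Fintype F] [DecidableEq F]

/-- The embedding of `F_2 = {0,1}` into a field `F`. -/
def e2 (a : ZMod 2) : F := (a.val : F)

/-- The inner product `x·d = Σ x_i d_i` of two vectors over `F`. -/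
def dotF {m : ℕ} (x d : Fin m → F) : F := ∑ i, x i * d i

/-- The quaternary vector `d_1 + w·d_2` attached to a pair of binary vectors. -/
def dvec {m : ℕ} (w : F) (p : (Fin m → ZMod 2) × (Fin m → ZMod 2)) : Fin m → F :=
  fun i => e2 (p.1 i) + w * e2 (p.2 i)

/-- The Hamming weight of the codeword `c_D(x) = (x·d)_{d∈D}`. -/
def wtF {m : ℕ} (D : Finset (Fin m → F)) (x : Fin m → F) : ℕ :=
  (D.filter (fun d => dotF x d ≠ 0)).card

/-- The codeword `c_D(x) = (x·d)_{d∈D}` of the code with defining set `D`. -/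
def codeword {m : ℕ} (D : Finset (Fin m → F)) (x : Fin m → F) : {d // d ∈ D} → F :=
  fun d => dotF x d.1

abbrev G4 := ZMod 2 × ZMod 2

def gmul (x y : G4) : G4 := (x.1 * y.1 + x.2 * y.2, x.1 * y.2 + x.2 * y.1 + x.2 * y.2)

def S0 : Finset (G4 × G4) :=
  Finset.univ.filter (fun s => (s.1.1 = 0 ∨ s.2.1 = 0) ∧ (s.1.2 = 0 ∨ s.2.2 = 0))

def g0 (p : G4 × G4) : ℕ :=
  (S0.filter (fun s => gmul p.1 s.1 + gmul p.2 s.2 ≠ 0)).card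

theorem S0_card : S0.card = 9 := by decide +kernel

theorem g0_map : (Finset.univ : Finset (G4 × G4)).val.map g0
    = Multiset.replicate 1 0 + Multiset.replicate 6 5 + Multiset.replicate 3 8
      + Multiset.replicate 6 7 := by decide +kernel

def phi (w : F) (x : G4) : F := e2 x.1 + w * e2 x.2

theorem e2_zero : (e2 0 : F) = 0 := by simp [e2]

theorem e2_one : (e2 1 : F) = 1 := by
  have : (1 : ZMod 2).val = 1 := rfl
  simp [e2, this]

theorem z2_cases : ∀ a : ZMod 2, a = 0 ∨ a = 1 := by decide

theorem two_zero (hF : Fintype.card F = 4) : (1 : F) + 1 = 0 := by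
  have h : ((Fintype.card F : ℕ) : F) = 0 := Nat.cast_card_eq_zero F
  rw [hF] at h
  have h2 : ((1 : F) + 1) * (1 + 1) = 0 := by push_cast at h; linear_combination h
  exact mul_self_eq_zero.mp h2

theorem e2_add (h2 : (1 : F) + 1 = 0) (a b : ZMod 2) : (e2 (a + b) : F) = e2 a + e2 b := by
  have h11 : (1 : ZMod 2) + 1 = 0 := rfl
  rcases z2_cases a with rfl | rfl <;> rcases z2_cases b with rfl | rfl <;>
    simp [e2_zero, e2_one, h11, h2]

theorem e2_mul (a b : ZMod 2) : (e2 (a * b) : F) = e2 a * e2 b := by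
  rcases z2_cases a with rfl | rfl <;> rcases z2_cases b with rfl | rfl <;>
    simp [e2_zero, e2_one]

theorem phi_add (h2 : (1 : F) + 1 = 0) (w : F) (x y : G4) :
    phi w (x + y) = phi w x + phi w y := by
  simp only [phi, Prod.fst_add, Prod.snd_add, e2_add h2]; ring

theorem phi_mul (h2 : (1 : F) + 1 = 0) (w : F) (hw : w ^ 2 + w + 1 = 0) (x y : G4) :
    phi w (gmul x y) = phi w x * phi w y := by
  have hw' : w ^ 2 = 1 + w := by linear_combination hw - (1 + w) * h2
  simp only [phi, gmul, e2_add h2, e2_mul]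
  linear_combination (-(e2 x.2 * e2 y.2)) * hw'

theorem phi_zero (w : F) : phi w 0 = 0 := by simp [phi, e2_zero]

theorem phi_eq_zero (h2 : (1 : F) + 1 = 0) (w : F) (hw : w ^ 2 + w + 1 = 0) (x : G4) :
    phi w x = 0 ↔ x = 0 := by
  constructor
  · obtain ⟨a, b⟩ := x
    intro h
    rcases z2_cases a with rfl | rfl <;> rcases z2_cases b with rfl | rfl <;>
      simp only [phi, e2_zero, e2_one, mul_zero, mul_one, add_zero, zero_add] at h ⊢
    · rfl
    · subst h; simp at hw
    · simp at h
    · exfalso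
      have : w = 1 := by linear_combination h - h2
      subst this
      exact one_ne_zero (α := F) (by linear_combination hw - h2)
  · rintro rfl; exact phi_zero w

theorem phi_bij (hF : Fintype.card F = 4) (w : F) (hw : w ^ 2 + w + 1 = 0) :
    Function.Bijective (phi w) := by
  have h2 := two_zero hF
  rw [Fintype.bijective_iff_injective_and_card]
  refine ⟨fun x y h => ?_, by rw [hF]; rfl⟩
  have hxx : ∀ x : G4, x + x = 0 := by decide
  have : phi w (x + y) = 0 := by
    rw [phi_add h2, h]; linear_combination (phi w y) * h2
  rw [phi_eq_zero h2 w hw] at this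
  calc x = x + (y + y) := by rw [hxx, add_zero]
    _ = (x + y) + y := by rw [add_assoc]
    _ = y := by rw [this, zero_add]

noncomputable def SF (w : F) : Finset (F × F) := S0.image (Prod.map (phi w) (phi w))

noncomputable def gF (w : F) (p : F × F) : ℕ :=
  ((SF w).filter (fun s => p.1 * s.1 + p.2 * s.2 ≠ 0)).card

theorem SF_card (hF : Fintype.card F = 4) (w : F) (hw : w ^ 2 + w + 1 = 0) :
    (SF w).card = 9 := by
  have hb := (phi_bij hF w hw).injective
  rw [SF, Finset.card_image_of_injective _ (hb.prodMap hb), S0_card]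

theorem gF_phi (hF : Fintype.card F = 4) (w : F) (hw : w ^ 2 + w + 1 = 0) (p : G4 × G4) :
    gF w (Prod.map (phi w) (phi w) p) = g0 p := by
  have hb := (phi_bij hF w hw).injective
  have h2 := two_zero hF
  rw [gF, SF, Finset.filter_image, Finset.card_image_of_injective _ (hb.prodMap hb), g0]
  congr 1
  apply Finset.filter_congr
  intro s _
  simp only [Prod.map_fst, Prod.map_snd, ← phi_mul h2 w hw, ← phi_add h2, ne_eq,
    phi_eq_zero h2 w hw]

theorem gF_map1 (hF : Fintype.card F = 4) (w : F) (hw : w ^ 2 + w + 1 = 0) :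
    gF w ∘ Prod.map (phi w) (phi w) = g0 := by
  funext p
  rw [Function.comp_apply, gF_phi hF w hw]

theorem univ_map (hF : Fintype.card F = 4) (w : F) (hw : w ^ 2 + w + 1 = 0) : (Finset.univ : Finset (F × F)).val
      = (Finset.univ : Finset (G4 × G4)).val.map (Prod.map (phi w) (phi w)) := by
  have hb := phi_bij hF w hw
  exact (Multiset.map_univ_val_equiv (Equiv.ofBijective _ (hb.prodMap hb))).symm

theorem gF_map2 (hF : Fintype.card F = 4) (w : F) (hw : w ^ 2 + w + 1 = 0) :
    (Finset.univ : Finset (F × F)).val.map (gF w) = (Finset.univ : Finset (G4 × G4)).val.map g0 := by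
  rw [univ_map hF w hw, Multiset.map_map, gF_map1 hF w hw]

theorem gF_map (hF : Fintype.card F = 4) (w : F) (hw : w ^ 2 + w + 1 = 0) :
    (Finset.univ : Finset (F × F)).val.map (gF w)
    = Multiset.replicate 1 0 + Multiset.replicate 6 5 + Multiset.replicate 3 8
      + Multiset.replicate 6 7 := (gF_map2 hF w hw).trans g0_map

/-- Vectors vanishing off `U ∪ {a,b}` with `(d a, d b) ∈ Q`. -/
def boxF {m : ℕ} (U : Finset (Fin m)) (a b : Fin m) (Q : Finset (F × F)) : Finset (Fin m → F) :=
  Finset.univ.filter (fun d => (∀ i, i ∉ U → i ≠ a → i ≠ b → d i = 0) ∧ (d a, d b) ∈ Q)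

theorem box_single {m : ℕ} (hF : Fintype.card F = 4) (U : Finset (Fin m)) (a b : Fin m)
    (hab : a ≠ b) (ha : a ∉ U) (hb : b ∉ U) (s : F × F) :
    (boxF U a b {s}).card = 4 ^ U.card := by
  have : boxF U a b {s} = Fintype.piFinset (fun i => if i ∈ U then Finset.univ else
      if i = a then {s.1} else if i = b then {s.2} else ({0} : Finset F)) := by
    ext d
    simp only [boxF, Finset.mem_filter, Finset.mem_univ, true_and, Fintype.mem_piFinset,
      Finset.mem_singleton]
    constructor
    · rintro ⟨h0, h1⟩ i
      subst h1
      by_cases hU : i ∈ U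
      · simp [hU]
      by_cases hia : i = a
      · subst hia; simp [hU]
      by_cases hib : i = b
      · subst hib; simp [hU, hia]
      · simp [hU, hia, hib, h0 i hU hia hib]
    · intro h
      refine ⟨fun i h1 h2 h3 => by simpa [h1, h2, h3] using h i, ?_⟩
      have h1 : d a = s.1 := by simpa [ha] using h a
      have h2 : d b = s.2 := by simpa [hb, hab.symm] using h b
      rw [h1, h2]
  rw [this, Fintype.card_piFinset]
  have h2 : ∀ i, (if i ∈ U then Finset.univ else
      if i = a then {s.1} else if i = b then {s.2} else ({0} : Finset F)).card
      = if i ∈ U then 4 else 1 := by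
    intro i
    split_ifs <;> simp [hF]
  simp only [h2]
  rw [Finset.prod_ite_mem, Finset.univ_inter, Finset.prod_const]

theorem box_card {m : ℕ} (hF : Fintype.card F = 4) (U : Finset (Fin m)) (a b : Fin m)
    (hab : a ≠ b) (ha : a ∉ U) (hb : b ∉ U) (Q : Finset (F × F)) :
    (boxF U a b Q).card = 4 ^ U.card * Q.card := by
  rw [Finset.card_eq_sum_card_fiberwise (f := fun d => (d a, d b)) (t := Q)]
  · rw [Finset.sum_congr rfl (g := fun _ => 4 ^ U.card), Finset.sum_const, smul_eq_mul, mul_comm]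
    intro s hs
    rw [← box_single hF U a b hab ha hb s]
    congr 1
    ext d
    simp only [boxF, Finset.mem_filter, Finset.mem_univ, true_and, Finset.mem_singleton]
    constructor
    · rintro ⟨⟨h0, _⟩, h2⟩; exact ⟨h0, h2⟩
    · rintro ⟨h0, h2⟩; exact ⟨⟨h0, h2 ▸ hs⟩, h2⟩
  · intro d hd
    simp only [boxF, Finset.coe_filter, Finset.mem_univ, true_and, Set.mem_ofPred_eq] at hd
    exact hd.2

theorem mem_delta_iff {m : ℕ} (A : Finset (Fin m)) (v : Fin m → ZMod 2) :
    v ∈ delta A ↔ ∀ i, i ∉ A → v i = 0 := by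
  simp only [delta, supp, Finset.mem_filter, Finset.mem_univ, true_and, Finset.subset_iff]
  exact forall_congr' fun i => ⟨fun h hi => by by_contra h'; exact hi (h h'),
    fun h hi => by by_contra h'; exact hi (h h')⟩

theorem mem_delta_union {m : ℕ} (A B : Finset (Fin m)) (a b : Fin m)
    (hA : A \ B = {a}) (hB : B \ A = {b}) (v : Fin m → ZMod 2) :
    v ∈ delta A ∪ delta B ↔
      (∀ i, i ∉ A ∩ B → i ≠ a → i ≠ b → v i = 0) ∧ (v a = 0 ∨ v b = 0) := by
  have hA' : ∀ i, (i ∈ A ∧ i ∉ B) ↔ i = a := fun i => by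
    rw [← Finset.mem_sdiff, hA, Finset.mem_singleton]
  have hB' : ∀ i, (i ∈ B ∧ i ∉ A) ↔ i = b := fun i => by
    rw [← Finset.mem_sdiff, hB, Finset.mem_singleton]
  have ha := (hA' a).2 rfl
  have hb := (hB' b).2 rfl
  simp only [Finset.mem_union, mem_delta_iff, Finset.mem_inter]
  constructor
  · rintro (h | h)
    · exact ⟨fun i h1 h2 h3 => h i (by have := hA' i; tauto), Or.inr (h b hb.2)⟩
    · exact ⟨fun i h1 h2 h3 => h i (by have := hB' i; tauto), Or.inl (h a ha.2)⟩
  · rintro ⟨h, h' | h'⟩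
    · right
      intro i hi
      by_cases hia : i = a
      · rw [hia, h']
      · exact h i (by tauto) hia (by rintro rfl; exact hi hb.1)
    · left
      intro i hi
      by_cases hib : i = b
      · rw [hib, h']
      · exact h i (by tauto) (by rintro rfl; exact hi ha.1) hib

theorem D_eq {m : ℕ} (hF : Fintype.card F = 4) (w : F) (hw : w ^ 2 + w + 1 = 0)
    (A B : Finset (Fin m)) (a b : Fin m) (hA : A \ B = {a}) (hB : B \ A = {b}) :
    ((delta A ∪ delta B) ×ˢ (delta A ∪ delta B)).image (dvec w) = boxF (A ∩ B) a b (SF w) := by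
  have hbij := phi_bij hF w hw
  have h2 := two_zero hF
  ext d
  obtain ⟨c, rfl⟩ : ∃ c : Fin m → G4, d = fun i => phi w (c i) := by
    choose c hc using fun i => hbij.surjective (d i)
    exact ⟨c, funext fun i => (hc i).symm⟩
  have key : (fun i => phi w (c i)) ∈
      ((delta A ∪ delta B) ×ˢ (delta A ∪ delta B)).image (dvec w) ↔
      (fun i => (c i).1) ∈ delta A ∪ delta B ∧ (fun i => (c i).2) ∈ delta A ∪ delta B := by
    rw [Finset.mem_image]
    constructor
    · rintro ⟨p, hp, he⟩
      have : ∀ i, (p.1 i, p.2 i) = c i := fun i => hbij.injective (congrFun he i)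
      have h1 : (fun i => (c i).1) = p.1 := funext fun i => by rw [← this i]
      have h2 : (fun i => (c i).2) = p.2 := funext fun i => by rw [← this i]
      rw [h1, h2]
      exact Finset.mem_product.1 hp
    · intro h
      exact ⟨(fun i => (c i).1, fun i => (c i).2), Finset.mem_product.2 h, rfl⟩
  rw [key, mem_delta_union A B a b hA hB, mem_delta_union A B a b hA hB]
  have hS : (phi w (c a), phi w (c b)) ∈ SF w ↔ (c a, c b) ∈ S0 := by
    rw [SF, Finset.mem_image]
    constructor
    · rintro ⟨s, hs, he⟩
      have := (hbij.injective.prodMap hbij.injective) (a₁ := s) (a₂ := (c a, c b)) he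
      rwa [← this]
    · intro h; exact ⟨_, h, rfl⟩
  simp only [boxF, Finset.mem_filter, Finset.mem_univ, true_and, hS, phi_eq_zero h2 w hw, S0,
    Prod.ext_iff, Prod.fst_zero, Prod.snd_zero]
  constructor
  · rintro ⟨⟨h1, h2⟩, h3, h4⟩
    exact ⟨fun i x y z => ⟨h1 i x y z, h3 i x y z⟩, h2, h4⟩
  · rintro ⟨h, h2, h4⟩
    exact ⟨⟨fun i x y z => (h i x y z).1, h2⟩, fun i x y z => (h i x y z).2, h4⟩

theorem wtF_erase {m : ℕ} (D : Finset (Fin m → F)) (x : Fin m → F) :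
    wtF (D.erase 0) x = wtF D x := by
  unfold wtF
  congr 1
  ext d
  simp only [Finset.mem_filter, Finset.mem_erase]
  constructor
  · rintro ⟨⟨_, h⟩, h'⟩; exact ⟨h, h'⟩
  · rintro ⟨h, h'⟩
    refine ⟨⟨?_, h⟩, h'⟩
    rintro rfl
    simp [dotF] at h'

/-- Weight when `x` vanishes on `T`. -/
theorem wt_zero {m : ℕ} (hF : Fintype.card F = 4) (w : F)
    (T : Finset (Fin m)) (a b : Fin m) (hab : a ≠ b) (ha : a ∉ T) (hb : b ∉ T)
    (x : Fin m → F) (hx : ∀ i ∈ T, x i = 0) :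
    wtF (boxF T a b (SF w)) x = 4 ^ T.card * gF w (x a, x b) := by
  rw [gF, ← box_card hF T a b hab ha hb, wtF]
  congr 1
  ext d
  simp only [boxF, Finset.mem_filter, Finset.mem_univ, true_and]
  rw [and_assoc]
  refine and_congr_right fun h0 => and_congr_right fun _ => ?_
  have : dotF x d = x a * d a + x b * d b := by
    rw [dotF]
    refine Fintype.sum_eq_add a b hab ?_
    rintro i ⟨hia, hib⟩
    by_cases hi : i ∈ T
    · rw [hx i hi, zero_mul]
    · rw [h0 i hi hia hib, mul_zero]
  rw [this]

theorem dotF_add_single {m : ℕ} (x d : Fin m → F) (j : Fin m) (c : F) :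
    dotF x (d + Pi.single j c) = dotF x d + x j * c := by
  simp only [dotF, Pi.add_apply, mul_add, Finset.sum_add_distrib]
  congr 1
  rw [Finset.sum_eq_single j] <;> simp +contextual [Pi.single_apply]

theorem wt_ne {m : ℕ} (hF : Fintype.card F = 4) (w : F)
    (T : Finset (Fin m)) (a b : Fin m) (ha : a ∉ T) (hb : b ∉ T)
    (x : Fin m → F) (j : Fin m) (hj : j ∈ T) (hx : x j ≠ 0) :
    4 * wtF (boxF T a b (SF w)) x = 3 * (boxF T a b (SF w)).card := by
  set D := boxF T a b (SF w) with hD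
  have hshift : ∀ d c, d ∈ D → d + Pi.single j c ∈ D := by
    intro d c hd
    simp only [hD, boxF, Finset.mem_filter, Finset.mem_univ, true_and] at hd ⊢
    have haj : a ≠ j := fun h => ha (h ▸ hj)
    have hbj : b ≠ j := fun h => hb (h ▸ hj)
    refine ⟨fun i h1 h2 h3 => ?_, ?_⟩
    · have hij : i ≠ j := fun h => h1 (h ▸ hj)
      simp [hij, hd.1 i h1 h2 h3]
    · simpa [haj, hbj] using hd.2
  have hle : ∀ c c' : F, (D.filter (fun d => dotF x d = c)).card ≤
      (D.filter (fun d => dotF x d = c')).card := by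
    intro c c'
    apply Finset.card_le_card_of_injOn (fun d => d + Pi.single j ((x j)⁻¹ * (c' - c)))
    · intro d hd
      simp only [Finset.coe_filter, Set.mem_ofPred_eq] at hd ⊢
      refine ⟨hshift _ _ hd.1, ?_⟩
      rw [dotF_add_single, hd.2, mul_inv_cancel_left₀ hx]; ring
    · intro d _ d' _ h
      exact add_right_cancel h
  have htot : D.card = 4 * (D.filter (fun d => dotF x d = 0)).card := by
    rw [Finset.card_eq_sum_card_fiberwise (f := dotF x) (t := Finset.univ) (by simp),
      Finset.sum_congr rfl (fun c _ => le_antisymm (hle c 0) (hle 0 c))]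
    simp [hF]
  have hsplit := Finset.card_filter_add_card_filter_not (s := D) (fun d => dotF x d = 0)
  have : wtF D x = (D.filter (fun d => ¬ dotF x d = 0)).card := rfl
  omega

theorem unit_mem (w : F) {m : ℕ} (T : Finset (Fin m)) (a b : Fin m) (hab : a ≠ b)
    (ha : a ∉ T) (hb : b ∉ T) (i : Fin m) (hi : i ∈ T ∨ i = a ∨ i = b) :
    (Pi.single i 1 : Fin m → F) ∈ boxF T a b (SF w) := by
  have h00 : ((0 : F), (0 : F)) ∈ SF w :=
    Finset.mem_image.2 ⟨(0, 0), by decide +kernel, by simp [phi, e2_zero]⟩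
  have h10 : ((1 : F), (0 : F)) ∈ SF w :=
    Finset.mem_image.2 ⟨((1, 0), 0), by decide +kernel, by simp [phi, e2_zero, e2_one]⟩
  have h01 : ((0 : F), (1 : F)) ∈ SF w :=
    Finset.mem_image.2 ⟨(0, (1, 0)), by decide +kernel, by simp [phi, e2_zero, e2_one]⟩
  simp only [boxF, Finset.mem_filter, Finset.mem_univ, true_and]
  constructor
  · intro k h1 h2 h3
    have : k ≠ i := by
      rintro rfl
      rcases hi with h | h | h
      · exact h1 h
      · exact h2 h
      · exact h3 h
    simp [this]
  · rcases hi with hi | rfl | rfl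
    · have haj : a ≠ i := fun h => ha (h ▸ hi)
      have hbj : b ≠ i := fun h => hb (h ▸ hi)
      simpa [haj, hbj] using h00
    · simpa [hab.symm] using h10
    · simpa [hab] using h01

theorem dotF_single {m : ℕ} (x : Fin m → F) (j : Fin m) : dotF x (Pi.single j 1) = x j := by
  have := dotF_add_single x 0 j 1
  rw [zero_add] at this
  rw [this]; simp [dotF]

theorem code_card {m : ℕ} (hF : Fintype.card F = 4) (w : F)
    (T : Finset (Fin m)) (a b : Fin m) (hab : a ≠ b) (ha : a ∉ T) (hb : b ∉ T) :
    (Finset.univ.image (fun x : Fin m → F => codeword ((boxF T a b (SF w)).erase 0) x)).card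
      = 4 ^ T.card * 16 := by
  have h16 : (Finset.univ : Finset (F × F)).card = 16 := by
    simp [hF]
  rw [← h16, ← box_card hF T a b hab ha hb]
  rw [← Finset.card_image_of_injOn (s := boxF T a b Finset.univ)
    (f := fun x : Fin m → F => codeword ((boxF T a b (SF w)).erase 0) x)]
  · congr 1
    ext c
    simp only [Finset.mem_image, Finset.mem_univ, true_and]
    constructor
    · rintro ⟨x, rfl⟩
      refine ⟨fun i => if i ∈ T ∨ i = a ∨ i = b then x i else 0, ?_, ?_⟩
      · simp only [boxF, Finset.mem_filter, Finset.mem_univ, true_and, and_true]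
        intro i h1 h2 h3
        simp [h1, h2, h3]
      · funext d
        have hd := (Finset.mem_erase.1 d.2).2
        simp only [boxF, Finset.mem_filter, Finset.mem_univ, true_and] at hd
        simp only [codeword, dotF]
        refine Finset.sum_congr rfl fun i _ => ?_
        split_ifs with h
        · rfl
        · push Not at h
          rw [hd.1 i h.1 h.2.1 h.2.2]; simp
    · rintro ⟨x, _, rfl⟩; exact ⟨x, rfl⟩
  · intro x hx y hy h
    simp only [boxF, Finset.coe_filter, Finset.mem_univ, true_and, and_true,
      Set.mem_ofPred_eq] at hx hy
    funext i
    by_cases hi : i ∈ T ∨ i = a ∨ i = b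
    · have hmem : (Pi.single i 1 : Fin m → F) ∈ (boxF T a b (SF w)).erase 0 :=
        Finset.mem_erase.2 ⟨by simp, unit_mem w T a b hab ha hb i hi⟩
      have := congrFun h ⟨_, hmem⟩
      simpa [codeword, dotF_single] using this
    · push Not at hi
      rw [hx i hi.1 hi.2.1 hi.2.2, hy i hi.1 hi.2.1 hi.2.2]

theorem wt_map {m : ℕ} (hF : Fintype.card F = 4) (w : F) (hw : w ^ 2 + w + 1 = 0)
    (T : Finset (Fin m)) (a b : Fin m) (hab : a ≠ b) (ha : a ∉ T) (hb : b ∉ T) (k r : ℕ)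
    (hT : T.card = k + 1) (hm : m = k + 3 + r) :
    (Finset.univ : Finset (Fin m → F)).val.map (wtF (boxF T a b (SF w)))
      = Multiset.replicate (1 * 4 ^ r) 0
        + Multiset.replicate (6 * 4 ^ r) (5 * 4 ^ (k + 1))
        + Multiset.replicate (3 * 4 ^ r) (8 * 4 ^ (k + 1))
        + Multiset.replicate (6 * 4 ^ r) (7 * 4 ^ (k + 1))
        + Multiset.replicate ((4 ^ (k + 3) - 16) * 4 ^ r) (27 * 4 ^ k) := by
  set U : Finset (Fin m) := (insert a (insert b T))ᶜ with hU
  have hUc : U.card = r := by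
    rw [hU, Finset.card_compl, Finset.card_insert_of_notMem, Finset.card_insert_of_notMem hb, hT,
      Fintype.card_fin]
    · omega
    · simp [hab, ha]
  have haU : a ∉ U := by simp [hU]
  have hbU : b ∉ U := by simp [hU]
  have hDc : (boxF T a b (SF w)).card = 4 ^ (k + 1) * 9 := by
    rw [box_card hF T a b hab ha hb, SF_card hF w hw, hT]
  have hZ : ∀ x : Fin m → F, (∀ i, i ∉ U → i ≠ a → i ≠ b → x i = 0) ↔ ∀ i ∈ T, x i = 0 := by
    intro x
    refine forall_congr' fun i => ?_
    simp only [hU, Finset.mem_compl, not_not, Finset.mem_insert]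
    constructor
    · intro h hi
      exact h (Or.inr (Or.inr hi)) (fun h => ha (h ▸ hi)) (fun h => hb (h ▸ hi))
    · intro h h1 h2 h3; exact h (by tauto)
  have hw1 : ∀ x : Fin m → F, (∀ i ∈ T, x i = 0) →
      wtF (boxF T a b (SF w)) x = 4 ^ (k + 1) * gF w (x a, x b) := by
    intro x hx; rw [wt_zero hF w T a b hab ha hb x hx, hT]
  have hw2 : ∀ x : Fin m → F, ¬ (∀ i ∈ T, x i = 0) →
      wtF (boxF T a b (SF w)) x = 27 * 4 ^ k := by
    intro x hx
    push Not at hx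
    obtain ⟨j, hj, hx⟩ := hx
    have := wt_ne hF w T a b ha hb x j hj hx
    rw [hDc, pow_succ] at this
    omega
  have h16 : (Finset.univ : Finset (F × F)).card = 16 := by
    simp [hF]
  have hcZ : ∀ Q : Finset (F × F),
      ((Finset.univ : Finset (Fin m → F)).filter
        (fun x => (∀ i ∈ T, x i = 0) ∧ (x a, x b) ∈ Q)).card = 4 ^ r * Q.card := by
    intro Q
    rw [← hUc, ← box_card hF U a b hab haU hbU, boxF]
    simp only [hZ]
  ext v
  rw [Multiset.count_map]
  change ((Finset.univ : Finset (Fin m → F)).filter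
    (fun x => v = wtF (boxF T a b (SF w)) x)).card = _
  rw [← Finset.card_filter_add_card_filter_not (fun x : Fin m → F => ∀ i ∈ T, x i = 0),
    Finset.filter_filter, Finset.filter_filter]
  have e1 : ((Finset.univ : Finset (Fin m → F)).filter
      (fun x => v = wtF (boxF T a b (SF w)) x ∧ ∀ i ∈ T, x i = 0)).card
      = 4 ^ r * ((Finset.univ : Finset (F × F)).filter
          (fun p => v = 4 ^ (k + 1) * gF w p)).card := by
    rw [← hcZ]
    congr 1
    ext x
    simp only [Finset.mem_filter, Finset.mem_univ, true_and]
    constructor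
    · rintro ⟨h1, h2⟩; exact ⟨h2, by rw [h1, hw1 x h2]⟩
    · rintro ⟨h1, h2⟩; exact ⟨by rw [h2, hw1 x h1], h1⟩
  have e2' : ((Finset.univ : Finset (Fin m → F)).filter
      (fun x => ¬ ∀ i ∈ T, x i = 0)).card = (4 ^ (k + 3) - 16) * 4 ^ r := by
    have h1 := Finset.card_filter_add_card_filter_not (s := (Finset.univ : Finset (Fin m → F)))
      (fun x : Fin m → F => ∀ i ∈ T, x i = 0)
    have h2 := hcZ Finset.univ
    simp only [Finset.mem_univ, and_true] at h2
    rw [h2, h16, Finset.card_univ, Fintype.card_fun, hF, Fintype.card_fin] at h1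
    have h3 : 4 ^ m = 4 ^ (k + 3) * 4 ^ r := by rw [← pow_add, ← hm]
    rw [Nat.sub_mul]
    omega
  have e2 : ((Finset.univ : Finset (Fin m → F)).filter
      (fun x => v = wtF (boxF T a b (SF w)) x ∧ ¬ ∀ i ∈ T, x i = 0)).card
      = if 27 * 4 ^ k = v then (4 ^ (k + 3) - 16) * 4 ^ r else 0 := by
    split_ifs with hv
    · rw [← e2']
      congr 1
      ext x
      simp only [Finset.mem_filter, Finset.mem_univ, true_and]
      constructor
      · exact fun h => h.2
      · intro h; exact ⟨by rw [hw2 x h, hv], h⟩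
    · rw [Finset.card_eq_zero, Finset.filter_eq_empty_iff]
      rintro x _ ⟨h1, h2⟩
      exact hv (by rw [h1, hw2 x h2])
  have e3 : ((Finset.univ : Finset (F × F)).filter
      (fun p => v = 4 ^ (k + 1) * gF w p)).card =
      Multiset.count v (((Finset.univ : Finset (F × F)).val.map (gF w)).map
        (fun t => 4 ^ (k + 1) * t)) := by
    rw [Multiset.map_map, Multiset.count_map]; rfl
  rw [e1, e2, e3, gF_map hF w hw]
  simp only [Multiset.map_add, Multiset.map_replicate, Multiset.count_add,
    Multiset.count_replicate, mul_zero, mul_comm (4 ^ (k + 1)) 5, mul_comm (4 ^ (k + 1)) 8,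
    mul_comm (4 ^ (k + 1)) 7, mul_comm (4 ^ r), add_mul, ite_mul, zero_mul]

/-- Corollary 4.9(iii): for `A, B ⊆ [m]` with `A ∩ B ≠ ∅` and `|A\B| = |B\A| = 1`,
`Δ = Δ_A ∪ Δ_B` and `D = Δ + wΔ`, the code `C_{D^*}` has length `9·2^{2|A|−2}−1`,
`4^{|A|+1}` codewords, the stated weight distribution, and is a four-weight quaternary
code. -/
theorem quaternary_code_intersecting_equal_size {m : ℕ} (hm : 1 ≤ m)
    (hF : Fintype.card F = 4) (w : F) (hw : w ^ 2 + w + 1 = 0)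
    (A B : Finset (Fin m)) (hint : (A ∩ B).Nonempty)
    (hsA : (A \ B).card = 1) (hsB : (B \ A).card = 1) :
    ((((delta A ∪ delta B) ×ˢ (delta A ∪ delta B)).image (dvec w)).erase 0).card
      = 9 * 2 ^ (2 * A.card - 2) - 1
    ∧ (Finset.univ.image
        (fun x : Fin m → F => codeword
          ((((delta A ∪ delta B) ×ˢ (delta A ∪ delta B)).image (dvec w)).erase 0) x)).card
      = 4 ^ (A.card + 1)
    ∧ (Finset.univ.val.map
        (fun x : Fin m → F =>
          wtF ((((delta A ∪ delta B) ×ˢ (delta A ∪ delta B)).image (dvec w)).erase 0) x))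
      = Multiset.replicate (1 * 4 ^ (m - A.card - 1)) 0
        + Multiset.replicate (6 * 4 ^ (m - A.card - 1)) (5 * 2 ^ (2 * A.card - 2))
        + Multiset.replicate (3 * 4 ^ (m - A.card - 1)) (2 ^ (2 * A.card + 1))
        + Multiset.replicate (6 * 4 ^ (m - A.card - 1)) (7 * 2 ^ (2 * A.card - 2))
        + Multiset.replicate ((4 ^ (A.card + 1) - 16) * 4 ^ (m - A.card - 1))
            (27 * 2 ^ (2 * A.card - 4))
    ∧ ((Finset.univ.image
        (fun x : Fin m → F =>
          wtF ((((delta A ∪ delta B) ×ˢ (delta A ∪ delta B)).image (dvec w)).erase 0) x)).erase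
          0).card = 4 := by
  obtain ⟨a, hA⟩ := Finset.card_eq_one.1 hsA
  obtain ⟨b, hB⟩ := Finset.card_eq_one.1 hsB
  have ha : a ∈ A ∧ a ∉ B := by rw [← Finset.mem_sdiff, hA]; simp
  have hb : b ∈ B ∧ b ∉ A := by rw [← Finset.mem_sdiff, hB]; simp
  have hab : a ≠ b := by rintro rfl; exact ha.2 hb.1
  have haT : a ∉ A ∩ B := fun h => ha.2 (Finset.mem_inter.1 h).2
  have hbT : b ∉ A ∩ B := fun h => hb.2 (Finset.mem_inter.1 h).1
  obtain ⟨k, hk⟩ : ∃ k, (A ∩ B).card = k + 1 :=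
    ⟨(A ∩ B).card - 1, by have := hint.card_pos; omega⟩
  have hAc : A.card = k + 2 := by
    have := Finset.card_sdiff_add_card_inter A B
    omega
  obtain ⟨r, hr⟩ : ∃ r, m = k + 3 + r := by
    have h1 : (insert a (insert b (A ∩ B))).card = k + 3 := by
      rw [Finset.card_insert_of_notMem (by simp [hab, ha.2]), Finset.card_insert_of_notMem hbT, hk]
    have h2 := Finset.card_le_univ (insert a (insert b (A ∩ B)))
    rw [h1, Fintype.card_fin] at h2
    exact ⟨m - (k + 3), by omega⟩
  have p1 : 2 ^ (2 * A.card - 2) = 4 ^ (k + 1) := by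
    rw [show 2 * A.card - 2 = 2 * (k + 1) by omega, pow_mul]; norm_num
  have p2 : 2 ^ (2 * A.card + 1) = 8 * 4 ^ (k + 1) := by
    rw [show 2 * A.card + 1 = 2 * (k + 1) + 3 by omega, pow_add, pow_mul]; norm_num; ring
  have p3 : 2 ^ (2 * A.card - 4) = 4 ^ k := by
    rw [show 2 * A.card - 4 = 2 * k by omega, pow_mul]; norm_num
  have p4 : m - A.card - 1 = r := by omega
  have p5 : A.card + 1 = k + 3 := by omega
  rw [D_eq hF w hw A B a b hA hB, p1, p2, p3, p4, p5]
  have h3 := wt_map hF w hw (A ∩ B) a b hab haT hbT k r hk hr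
  have hwt : (fun x : Fin m → F => wtF ((boxF (A ∩ B) a b (SF w)).erase 0) x)
      = wtF (boxF (A ∩ B) a b (SF w)) := funext fun x => wtF_erase _ x
  rw [hwt]
  refine ⟨?_, ?_, h3, ?_⟩
  · have h0 : (0 : Fin m → F) ∈ boxF (A ∩ B) a b (SF w) := by
      simp only [boxF, Finset.mem_filter, Finset.mem_univ, true_and, Pi.zero_apply, implies_true]
      exact Finset.mem_image.2 ⟨(0, 0), by decide +kernel, by simp [phi, e2_zero]⟩
    rw [Finset.card_erase_of_mem h0, box_card hF _ a b hab haT hbT, SF_card hF w hw, hk, mul_comm]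
  · rw [code_card hF w _ a b hab haT hbT, hk]; ring
  · have hpos : 0 < 4 ^ k := by positivity
    have hr0 : (4 : ℕ) ^ r ≠ 0 := by positivity
    have hk0 : (4 ^ (k + 3) - 16) * 4 ^ r ≠ 0 := by
      have : 4 ^ (k + 3) = 4 ^ k * 64 := by rw [pow_add]; norm_num
      exact mul_ne_zero (by omega) hr0
    have hset : (Finset.univ.image (wtF (boxF (A ∩ B) a b (SF w)))).erase 0
        = {5 * 4 ^ (k + 1), 8 * 4 ^ (k + 1), 7 * 4 ^ (k + 1), 27 * 4 ^ k} := by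
      rw [Finset.image, h3]
      ext v
      simp only [Finset.mem_erase, Multiset.mem_toFinset, Multiset.mem_add,
        Multiset.mem_replicate, Finset.mem_insert, Finset.mem_singleton, ne_eq, hk0,
        not_false_eq_true, true_and, mul_eq_zero, hr0, or_false, OfNat.ofNat_ne_zero,
        one_ne_zero]
      rw [pow_succ]
      omega
    rw [hset, pow_succ]
    rw [Finset.card_insert_of_notMem, Finset.card_insert_of_notMem, Finset.card_insert_of_notMem,
      Finset.card_singleton] <;>
      simp only [Finset.mem_insert, Finset.mem_singleton] <;> omega
end

section
/- Let A, B ⊆ [m] with A ⊄ B and B ⊄ A, Δ = Δ_A ∪ Δ_B, D = Δ + wΔ ⊆ F_4^m, N = 2^{|A|} + 2^{|B|} − 2^{|A∩B|}, s = |A\B|, t = |B\A|. Then the binary subfield code C^{(2)}_{D^*} has length N² − 1, exactly 4^{|A∪B|} distinct codewords (dimension 2|A∪B| over F_2), and the multiset {wt(c^{(2)}_{D^*}(α,β)) : (α,β) ∈ F_2^m × F_2^m} is obtained from the following weight–multiplicity pairs, each multiplicity multiplied by 4^{m−|A∪B|} (coinciding weight values accumulate): weight 0, multiplicity 1; weight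 2^{|A|−1}·N, multiplicity 2(2^s−1); weight 2^{|B|−1}·N, multiplicity 2(2^t−1); weight (2^{|A|−1}+2^{|B|−1})·N, multiplicity 2(2^s−1)(2^t−1); weight 2^{|B|−1}(2^{|A|+1}+2^{|B|}−2^{|A∩B|+1}), multiplicity (2^t−1)²; weight 2^{|A|−1}(2^{|A|}+2^{|B|+1}−2^{|A∩B|+1}), multiplicity (2^s−1)²; weight (2^{|A|−1}+2^{|B|−1})(2^{|A|}+2^{|B|}−2^{|A∩B|+1}), multiplicity (2^s−1)²(2^t−1)²; weight (1/2)N² − (1/2)(2^{|A|}−2^{|A∩B|})(2^{|B|}−2^{|A∩B|}), multiplicity 2(2^s−1)(2^t−1); weight (1/2)N² + (1/2)·2^{|A∩B|}(2^{|A|}−2^{|A∩B|}), multiplicity 2(2^s−1)(2^t−1)²; weight (1/2)N² + (1/2)·2^{|A∩B|}(2^{|B|}−2^{|A∩B|}), multiplicity 2(2^s−1)²(2^t−1); weight (1/2)N², multiplicity 4^{|A∪B|} − 4^{s+t}. -/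
open Finset

/-- The inner product of two binary vectors. -/
def dot2 {m : ℕ} (u v : Fin m → ZMod 2) : ZMod 2 := ∑ i, u i * v i

variable {F : Type} [Field F] [Fintype F] [DecidableEq F]

/-- The codeword `c^{(2)}_D(α,β) = (α·d_2 + β·(d_1+d_2))_{d = d_1+w·d_2 ∈ D}` of the binary
subfield code, where `π₁, π₂` extract the components of the unique representation
`g = π₁(g) + w·π₂(g)`. -/
def cw2F {m : ℕ} (D : Finset (Fin m → F)) (π₁ π₂ : F → ZMod 2)
    (α β : Fin m → ZMod 2) : {d // d ∈ D} → ZMod 2 :=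
  fun d => dot2 α (fun i => π₂ (d.1 i)) + dot2 β (fun i => π₁ (d.1 i) + π₂ (d.1 i))

/-- The Hamming weight of the codeword `c^{(2)}_D(α,β)`, counted over the index set `D`. -/
def wt2F {m : ℕ} (D : Finset (Fin m → F)) (π₁ π₂ : F → ZMod 2)
    (α β : Fin m → ZMod 2) : ℕ :=
  (D.filter (fun d =>
    dot2 α (fun i => π₂ (d i)) + dot2 β (fun i => π₁ (d i) + π₂ (d i)) ≠ 0)).card

def psi (z : ZMod 2) : ℚ := if z = 0 then 1 else -1

theorem psi_add (y z : ZMod 2) : psi (y + z) = psi y * psi z := by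
  have : ∀ y z : ZMod 2, (y = 0 ∨ y = 1) ∧ (z = 0 ∨ z = 1) := by decide
  have h11 : (1 + 1 : ZMod 2) = 0 := by decide
  obtain ⟨h | h, h' | h'⟩ := this y z <;> subst h <;> subst h' <;> simp [psi, h11]

theorem ind_psi (z : ZMod 2) : (if z ≠ 0 then (1 : ℚ) else 0) = 1 / 2 * (1 - psi z) := by
  by_cases h : z = 0 <;> simp [psi, h]
  norm_num

theorem mem_delta' {m : ℕ} (S : Finset (Fin m)) (v : Fin m → ZMod 2) :
    v ∈ delta S ↔ ∀ i, i ∉ S → v i = 0 := by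
  simp only [delta, supp, Finset.mem_filter, Finset.mem_univ, true_and, Finset.subset_iff]
  exact forall_congr' fun i => by tauto

theorem card_delta' {m : ℕ} (S : Finset (Fin m)) : (delta S).card = 2 ^ S.card := by
  have : delta S = Fintype.piFinset (fun i => if i ∈ S then (Finset.univ : Finset (ZMod 2)) else {0}) := by
    ext v
    rw [mem_delta', Fintype.mem_piFinset]
    refine forall_congr' fun i => ?_
    by_cases h : i ∈ S <;> simp [h]
  rw [this, Fintype.card_piFinset]
  have h2 : ∀ i, (if i ∈ S then (Finset.univ : Finset (ZMod 2)) else {0}).card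
      = if i ∈ S then 2 else 1 := by
    intro i
    by_cases h : i ∈ S <;> simp [h]
  simp only [h2]
  rw [Finset.prod_ite]
  simp

theorem dot2_add_left {m : ℕ} (x y v : Fin m → ZMod 2) :
    dot2 (x + y) v = dot2 x v + dot2 y v := by
  simp [dot2, add_mul, Finset.sum_add_distrib]

theorem dot2_add_right {m : ℕ} (x y v : Fin m → ZMod 2) :
    dot2 x (y + v) = dot2 x y + dot2 x v := by
  simp [dot2, mul_add, Finset.sum_add_distrib]

theorem dot2_single {m : ℕ} (x : Fin m → ZMod 2) (i : Fin m) :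
    dot2 x (Pi.single i 1) = x i := by
  simp [dot2, Pi.single_apply]

theorem dot2_zero_right {m : ℕ} (x : Fin m → ZMod 2) : dot2 x 0 = 0 := by
  simp [dot2]

/-- indicator of vanishing on S -/
def van {m : ℕ} (S : Finset (Fin m)) (x : Fin m → ZMod 2) : ℚ :=
  if ∀ i ∈ S, x i = 0 then 1 else 0

theorem zmod2_add_self {m : ℕ} (v : Fin m → ZMod 2) : v + v = 0 := by
  ext i
  exact CharTwo.add_self_eq_zero _

theorem charsum_delta {m : ℕ} (S : Finset (Fin m)) (x : Fin m → ZMod 2) :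
    ∑ d ∈ delta S, psi (dot2 x d) = 2 ^ S.card * van S x := by
  by_cases h : ∀ i ∈ S, x i = 0
  · rw [Finset.sum_congr rfl (g := fun _ => (1 : ℚ))]
    · simp [van, if_pos h, card_delta']
    · intro d hd
      rw [mem_delta'] at hd
      have : dot2 x d = 0 := by
        refine Finset.sum_eq_zero fun i _ => ?_
        by_cases hi : i ∈ S
        · simp [h i hi]
        · simp [hd i hi]
      simp [psi, this]
  · rw [van, if_neg h, mul_zero]
    push Not at h
    obtain ⟨i, hi, hx⟩ := h
    have hx1 : x i = 1 := by
      have : ∀ z : ZMod 2, z ≠ 0 → z = 1 := by decide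
      exact this _ hx
    have key : ∑ d ∈ delta S, psi (dot2 x d)
        = ∑ d ∈ delta S, psi (dot2 x (d + Pi.single i 1)) := by
      refine (Finset.sum_nbij' (fun d => d + Pi.single i 1) (fun d => d + Pi.single i 1)
        ?_ ?_ ?_ ?_ ?_)
      · intro d hd
        rw [mem_delta'] at hd ⊢
        intro j hj
        have : j ≠ i := fun h => hj (h ▸ hi)
        simp [hd j hj, this]
      · intro d hd
        rw [mem_delta'] at hd ⊢
        intro j hj
        have : j ≠ i := fun h => hj (h ▸ hi)
        simp [hd j hj, this]
      · intro d _
        simp only [add_assoc, zmod2_add_self, add_zero]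
      · intro d _
        simp only [add_assoc, zmod2_add_self, add_zero]
      · intro d _
        simp only [add_assoc, zmod2_add_self, add_zero]
    have h2 : ∀ d, psi (dot2 x (d + Pi.single i 1)) = - psi (dot2 x d) := by
      intro d
      rw [dot2_add_right, dot2_single, hx1, psi_add]
      simp [psi]
    simp only [h2, Finset.sum_neg_distrib] at key
    linarith

theorem delta_inter {m : ℕ} (A B : Finset (Fin m)) : delta A ∩ delta B = delta (A ∩ B) := by
  ext v
  simp only [Finset.mem_inter, mem_delta']
  constructor
  · rintro ⟨h1, h2⟩ i hi
    by_cases h : i ∈ A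
    · exact h2 i fun hb => hi ⟨h, hb⟩
    · exact h1 i h
  · intro h
    exact ⟨fun i hi => h i fun hh => hi hh.1, fun i hi => h i fun hh => hi hh.2⟩

def chi {m : ℕ} (A B : Finset (Fin m)) (x : Fin m → ZMod 2) : ℚ :=
  ∑ d ∈ delta A ∪ delta B, psi (dot2 x d)

theorem chi_eq {m : ℕ} (A B : Finset (Fin m)) (x : Fin m → ZMod 2) :
    chi A B x = 2 ^ A.card * van A x + 2 ^ B.card * van B x
      - 2 ^ (A ∩ B).card * van (A ∩ B) x := by
  have := Finset.sum_union_inter (s₁ := delta A) (s₂ := delta B) (f := fun d => psi (dot2 x d))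
  rw [delta_inter, charsum_delta, charsum_delta, charsum_delta] at this
  rw [chi]
  linarith

theorem sum_van {m : ℕ} (S : Finset (Fin m)) :
    ∑ x : Fin m → ZMod 2, van S x = 2 ^ (m - S.card) := by
  have h : ∀ x : Fin m → ZMod 2, van S x = if x ∈ delta Sᶜ then 1 else 0 := by
    intro x
    simp [van, mem_delta']
  simp only [h]
  rw [Finset.sum_ite_mem, Finset.univ_inter]
  simp [card_delta', Finset.card_compl]

theorem k_chi {m : ℕ} (A B : Finset (Fin m)) (k : ℚ → ℚ) (x : Fin m → ZMod 2) :
    k (chi A B x) =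
      van (A ∪ B) x * k (2 ^ A.card + 2 ^ B.card - 2 ^ (A ∩ B).card)
      + (van B x - van (A ∪ B) x) * k (2 ^ B.card - 2 ^ (A ∩ B).card)
      + (van A x - van (A ∪ B) x) * k (2 ^ A.card - 2 ^ (A ∩ B).card)
      + (van (A ∩ B) x - van A x - van B x + van (A ∪ B) x) * k (- 2 ^ (A ∩ B).card)
      + (1 - van (A ∩ B) x) * k 0 := by
  rw [chi_eq]
  have hU : (∀ i ∈ A ∪ B, x i = 0) ↔ (∀ i ∈ A, x i = 0) ∧ (∀ i ∈ B, x i = 0) := by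
    simp only [Finset.mem_union, or_imp, forall_and]
  have hIA : (∀ i ∈ A, x i = 0) → (∀ i ∈ A ∩ B, x i = 0) :=
    fun h i hi => h i (Finset.mem_inter.1 hi).1
  have hIB : (∀ i ∈ B, x i = 0) → (∀ i ∈ A ∩ B, x i = 0) :=
    fun h i hi => h i (Finset.mem_inter.1 hi).2
  have hn1 : ¬ (∀ i ∈ A, x i = 0) → ¬ ((∀ i ∈ A, x i = 0) ∧ (∀ i ∈ B, x i = 0)) :=
    fun h hh => h hh.1
  have hn2 : ¬ (∀ i ∈ B, x i = 0) → ¬ ((∀ i ∈ A, x i = 0) ∧ (∀ i ∈ B, x i = 0)) :=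
    fun h hh => h hh.2
  simp only [van, hU]
  by_cases h1 : ∀ i ∈ A, x i = 0
  · have h3 := hIA h1
    by_cases h2 : ∀ i ∈ B, x i = 0
    · rw [if_pos h1, if_pos h2, if_pos h3, if_pos ⟨h1, h2⟩]
      ring_nf
    · rw [if_pos h1, if_neg h2, if_pos h3, if_neg (hn2 h2)]
      ring_nf
  · by_cases h2 : ∀ i ∈ B, x i = 0
    · have h3 := hIB h2
      rw [if_neg h1, if_pos h2, if_pos h3, if_neg (hn1 h1)]
      ring_nf
    · rw [if_neg h1, if_neg h2, if_neg (hn1 h1)]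
      by_cases h3 : ∀ i ∈ A ∩ B, x i = 0
      · rw [if_pos h3]
        ring_nf
      · rw [if_neg h3]
        ring_nf

theorem sum_k_chi {m : ℕ} (A B : Finset (Fin m)) (k : ℚ → ℚ) :
    ∑ x : Fin m → ZMod 2, k (chi A B x) =
      2 ^ (m - (A ∪ B).card) *
      (k (2 ^ A.card + 2 ^ B.card - 2 ^ (A ∩ B).card)
      + (2 ^ (A \ B).card - 1) * k (2 ^ B.card - 2 ^ (A ∩ B).card)
      + (2 ^ (B \ A).card - 1) * k (2 ^ A.card - 2 ^ (A ∩ B).card)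
      + (2 ^ (A \ B).card - 1) * (2 ^ (B \ A).card - 1) * k (- 2 ^ (A ∩ B).card)
      + (2 ^ (A ∪ B).card - 2 ^ ((A \ B).card + (B \ A).card)) * k 0) := by
  simp only [k_chi A B k]
  simp only [Finset.sum_add_distrib, ← Finset.sum_mul, Finset.sum_sub_distrib, sum_van]
  have hm : (A ∪ B).card ≤ m := by simpa using Finset.card_le_univ (A ∪ B)
  have e1 := Finset.card_sdiff_add_card_inter A B
  have e2 := Finset.card_sdiff_add_card_inter B A
  have e3 := Finset.card_union_add_card_inter A B
  rw [Finset.inter_comm B A] at e2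
  have f1 : m - A.card = (m - (A ∪ B).card) + (B \ A).card := by omega
  have f2 : m - B.card = (m - (A ∪ B).card) + (A \ B).card := by omega
  have f3 : m - (A ∩ B).card = (m - (A ∪ B).card) + (A \ B).card + (B \ A).card := by omega
  have f4 : ∑ x : Fin m → ZMod 2, (1 : ℚ) = 2 ^ (m - (A ∪ B).card) * 2 ^ (A ∪ B).card := by
    rw [← pow_add, Nat.sub_add_cancel hm]
    simp
  rw [f1, f2, f3, f4]
  simp only [pow_add]
  ring

section field

variable {F : Type} [Field F] [Fintype F] [DecidableEq F]

theorem comp_inj (hF : Fintype.card F = 4) (w : F)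
    (π₁ π₂ : F → ZMod 2) (hπ : ∀ g : F, g = e2 (π₁ g) + w * e2 (π₂ g)) :
    Function.Injective (fun p : ZMod 2 × ZMod 2 => (e2 p.1 + w * e2 p.2 : F)) := by
  have hs : Function.Surjective (fun p : ZMod 2 × ZMod 2 => (e2 p.1 + w * e2 p.2 : F)) :=
    fun g => ⟨(π₁ g, π₂ g), (hπ g).symm⟩
  refine ((Fintype.bijective_iff_surjective_and_card _).2 ⟨hs, ?_⟩).1
  rw [hF]
  simp [ZMod.card]

theorem pi_comp (hF : Fintype.card F = 4) (w : F)
    (π₁ π₂ : F → ZMod 2) (hπ : ∀ g : F, g = e2 (π₁ g) + w * e2 (π₂ g)) (a b : ZMod 2) :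
    π₁ (e2 a + w * e2 b) = a ∧ π₂ (e2 a + w * e2 b) = b := by
  have := comp_inj hF w π₁ π₂ hπ (a₁ := (π₁ (e2 a + w * e2 b), π₂ (e2 a + w * e2 b)))
    (a₂ := (a, b)) (hπ _).symm
  exact Prod.ext_iff.1 this

theorem dvec_inj {m : ℕ} (hF : Fintype.card F = 4) (w : F)
    (π₁ π₂ : F → ZMod 2) (hπ : ∀ g : F, g = e2 (π₁ g) + w * e2 (π₂ g)) :
    Function.Injective (dvec (m := m) w) := by
  intro p q h
  have : ∀ i, (p.1 i, p.2 i) = (q.1 i, q.2 i) := fun i =>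
    comp_inj hF w π₁ π₂ hπ (congrFun h i)
  ext i
  · exact congrArg Prod.fst (this i)
  · exact congrArg Prod.snd (this i)

theorem dvec_zero {m : ℕ} (w : F) : dvec (m := m) w 0 = 0 := by
  ext i
  simp [dvec, e2]

/-- value of the codeword at a pair -/
theorem val_dvec {m : ℕ} (hF : Fintype.card F = 4) (w : F)
    (π₁ π₂ : F → ZMod 2) (hπ : ∀ g : F, g = e2 (π₁ g) + w * e2 (π₂ g))
    (α β : Fin m → ZMod 2) (p : (Fin m → ZMod 2) × (Fin m → ZMod 2)) :
    dot2 α (fun i => π₂ (dvec w p i)) + dot2 β (fun i => π₁ (dvec w p i) + π₂ (dvec w p i))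
      = dot2 β p.1 + dot2 (α + β) p.2 := by
  have h1 : (fun i => π₂ (dvec w p i)) = p.2 := by
    ext i
    exact (pi_comp hF w π₁ π₂ hπ _ _).2
  have h2 : (fun i => π₁ (dvec w p i) + π₂ (dvec w p i)) = p.1 + p.2 := by
    ext i
    exact congrArg₂ (· + ·) (pi_comp hF w π₁ π₂ hπ _ _).1 (pi_comp hF w π₁ π₂ hπ _ _).2
  rw [h1, h2, dot2_add_right, dot2_add_left]
  ring

theorem card_Delta {m : ℕ} (A B : Finset (Fin m)) :
    (delta A ∪ delta B).card = 2 ^ A.card + 2 ^ B.card - 2 ^ (A ∩ B).card := by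
  rw [Finset.card_union, delta_inter, card_delta', card_delta', card_delta']

theorem card_Delta_rat {m : ℕ} (A B : Finset (Fin m)) :
    ((delta A ∪ delta B).card : ℚ) = 2 ^ A.card + 2 ^ B.card - 2 ^ (A ∩ B).card := by
  have := Finset.card_union_add_card_inter (delta A) (delta B)
  rw [delta_inter, card_delta', card_delta', card_delta'] at this
  have h : (((delta A ∪ delta B).card + 2 ^ (A ∩ B).card : ℕ) : ℚ)
    = ((2 ^ A.card + 2 ^ B.card : ℕ) : ℚ) := by rw [this]
  push_cast at h
  linarith

theorem wt_eq {m : ℕ} (hF : Fintype.card F = 4) (w : F)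
    (π₁ π₂ : F → ZMod 2) (hπ : ∀ g : F, g = e2 (π₁ g) + w * e2 (π₂ g))
    (A B : Finset (Fin m)) (α β : Fin m → ZMod 2) :
    (wt2F ((((delta A ∪ delta B) ×ˢ (delta A ∪ delta B)).image (dvec w)).erase 0)
            π₁ π₂ α β : ℚ)
    = 1 / 2 * ((2 ^ A.card + 2 ^ B.card - 2 ^ (A ∩ B).card) ^ 2
        - chi A B β * chi A B (α + β)) := by
  have h0 : dot2 α (fun i => π₂ ((0 : Fin m → F) i))
      + dot2 β (fun i => π₁ ((0 : Fin m → F) i) + π₂ ((0 : Fin m → F) i)) = 0 := by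
    rw [← dvec_zero w, val_dvec hF w π₁ π₂ hπ]
    simp [dot2_zero_right]
  rw [wt2F, Finset.filter_erase, Finset.erase_eq_of_notMem (by
    rw [Finset.mem_filter]
    exact fun h => h.2 h0), Finset.card_filter]
  push_cast
  rw [Finset.sum_image ((dvec_inj hF w π₁ π₂ hπ).injOn)]
  simp only [val_dvec hF w π₁ π₂ hπ, ind_psi, psi_add]
  rw [← Finset.mul_sum, Finset.sum_sub_distrib, Finset.sum_product, Finset.sum_product]
  simp only [chi, Finset.sum_mul_sum, ← card_Delta_rat]
  simp
  ring

end field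

theorem multiset_eq_of_sums (M M' : Multiset ℚ)
    (h : ∀ f : ℚ → ℚ, (M.map f).sum = (M'.map f).sum) : M = M' := by
  have key : ∀ (v : ℚ) (M : Multiset ℚ),
      (M.map (fun x => if v = x then (1 : ℚ) else 0)).sum = (M.count v : ℚ) := by
    intro v M
    induction M using Multiset.induction_on with
    | empty => simp
    | cons x M ih =>
      rw [Multiset.map_cons, Multiset.sum_cons, ih, Multiset.count_cons]
      by_cases hx : v = x
      · simp [hx, add_comm]
      · simp [hx]
  ext v
  have := h (fun x => if v = x then (1 : ℚ) else 0)
  rw [key, key] at this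
  exact_mod_cast this

theorem sum_pairs {m : ℕ} (G : (Fin m → ZMod 2) → (Fin m → ZMod 2) → ℚ) :
    ∑ ab : (Fin m → ZMod 2) × (Fin m → ZMod 2), G ab.2 (ab.1 + ab.2)
      = ∑ x, ∑ y, G x y := by
  rw [Fintype.sum_prod_type_right]
  refine Finset.sum_congr rfl fun x _ => ?_
  exact Fintype.sum_equiv (Equiv.addRight x) _ _ (fun y => rfl)

theorem restrict_dot {m : ℕ} (U : Finset (Fin m)) (x d : Fin m → ZMod 2) (hd : d ∈ delta U) :
    dot2 (fun i => if i ∈ U then x i else 0) d = dot2 x d := by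
  rw [mem_delta'] at hd
  refine Finset.sum_congr rfl fun i _ => ?_
  by_cases hi : i ∈ U
  · simp [hi]
  · simp [hd i hi]

theorem delta_mono {m : ℕ} {A U : Finset (Fin m)} (h : A ⊆ U) : delta A ⊆ delta U := by
  intro v hv
  rw [mem_delta'] at hv ⊢
  exact fun i hi => hv i fun hh => hi (h hh)

theorem single_mem {m : ℕ} {A B : Finset (Fin m)} {i : Fin m} (hi : i ∈ A ∪ B) :
    (Pi.single i 1 : Fin m → ZMod 2) ∈ delta A ∪ delta B := by
  rw [Finset.mem_union] at hi ⊢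
  refine hi.imp ?_ ?_ <;>
  · intro h
    rw [mem_delta']
    intro j hj
    have : j ≠ i := fun e => hj (e ▸ h)
    simp [this]

theorem zero_mem_D {m : ℕ} (A B : Finset (Fin m)) :
    (0 : Fin m → ZMod 2) ∈ delta A ∪ delta B := by
  rw [Finset.mem_union]
  left
  rw [mem_delta']
  simp

theorem card_codewords {F : Type} [Field F] [Fintype F] [DecidableEq F] {m : ℕ}
    (hF : Fintype.card F = 4) (w : F)
    (π₁ π₂ : F → ZMod 2) (hπ : ∀ g : F, g = e2 (π₁ g) + w * e2 (π₂ g))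
    (A B : Finset (Fin m)) :
    (Finset.univ.image
        (fun ab : (Fin m → ZMod 2) × (Fin m → ZMod 2) =>
          cw2F ((((delta A ∪ delta B) ×ˢ (delta A ∪ delta B)).image (dvec w)).erase 0)
            π₁ π₂ ab.1 ab.2)).card = 4 ^ (A ∪ B).card := by
  set D := (((delta A ∪ delta B) ×ˢ (delta A ∪ delta B)).image (dvec w)).erase 0 with hD
  have hsub : delta A ∪ delta B ⊆ delta (A ∪ B) :=
    Finset.union_subset (delta_mono Finset.subset_union_left) (delta_mono Finset.subset_union_right)
  have hmem : ∀ p, p ≠ 0 → p.1 ∈ delta A ∪ delta B → p.2 ∈ delta A ∪ delta B → dvec w p ∈ D := by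
    intro p hp h1 h2
    rw [hD, Finset.mem_erase]
    refine ⟨?_, Finset.mem_image_of_mem _ (Finset.mem_product.2 ⟨h1, h2⟩)⟩
    rw [← dvec_zero w]
    exact fun h => hp (dvec_inj hF w π₁ π₂ hπ h)
  have hcan : ∀ x y : Fin m → ZMod 2, (x + y) + x = y := by
    intro x y
    rw [add_comm x y, add_assoc, zmod2_add_self, add_zero]
  have himg : (Finset.univ.image
        (fun ab : (Fin m → ZMod 2) × (Fin m → ZMod 2) => cw2F D π₁ π₂ ab.1 ab.2))
      = (delta (A ∪ B) ×ˢ delta (A ∪ B)).image (fun q => cw2F D π₁ π₂ (q.1 + q.2) q.1) := by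
    ext c
    simp only [Finset.mem_image, Finset.mem_univ, true_and]
    constructor
    · rintro ⟨⟨α, β⟩, rfl⟩
      refine ⟨(fun i => if i ∈ A ∪ B then β i else 0,
        fun i => if i ∈ A ∪ B then (α + β) i else 0), ?_, ?_⟩
      · rw [Finset.mem_product, mem_delta', mem_delta']
        exact ⟨fun i hi => if_neg hi, fun i hi => if_neg hi⟩
      · funext ⟨d, hd⟩
        obtain ⟨p, hp, rfl⟩ := Finset.mem_image.1 (Finset.mem_of_mem_erase hd)
        rw [Finset.mem_product] at hp
        simp only [cw2F]
        rw [val_dvec hF w π₁ π₂ hπ, val_dvec hF w π₁ π₂ hπ, hcan,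
          restrict_dot _ _ _ (hsub hp.1), restrict_dot _ _ _ (hsub hp.2)]
    · rintro ⟨q, _, rfl⟩
      exact ⟨(q.1 + q.2, q.1), rfl⟩
  rw [himg, Finset.card_image_of_injOn, Finset.card_product, card_delta', ← mul_pow]
  · norm_num
  intro q hq r hr h
  simp only [Finset.coe_product, Set.mem_prod, Finset.mem_coe, mem_delta'] at hq hr
  have hv : ∀ p : (Fin m → ZMod 2) × (Fin m → ZMod 2), p ≠ 0 → p.1 ∈ delta A ∪ delta B → p.2 ∈ delta A ∪ delta B →
      dot2 q.1 p.1 + dot2 q.2 p.2 = dot2 r.1 p.1 + dot2 r.2 p.2 := by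
    intro p hp h1 h2
    have := congrFun h ⟨dvec w p, hmem p hp h1 h2⟩
    simp only [cw2F] at this
    rwa [val_dvec hF w π₁ π₂ hπ, val_dvec hF w π₁ π₂ hπ, hcan, hcan] at this
  have hne : ∀ i : Fin m, (Pi.single i 1 : Fin m → ZMod 2) ≠ 0 := by
    intro i hi
    have := congrFun hi i
    simp at this
  refine Prod.ext (funext fun i => ?_) (funext fun i => ?_)
  · by_cases hi : i ∈ A ∪ B
    · have := hv (Pi.single i 1, 0) (fun h => hne i (Prod.ext_iff.1 h).1) (single_mem hi)
        (zero_mem_D A B)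
      simpa [dot2_single, dot2_zero_right] using this
    · rw [hq.1 i hi, hr.1 i hi]
  · by_cases hi : i ∈ A ∪ B
    · have := hv (0, Pi.single i 1) (fun h => hne i (Prod.ext_iff.1 h).2) (zero_mem_D A B)
        (single_mem hi)
      simpa [dot2_single, dot2_zero_right] using this
    · rw [hq.2 i hi, hr.2 i hi]

/-- Proposition 5.3: weight distribution of the binary subfield code `C^{(2)}_{D^*}` for
`D = Δ + wΔ`, where `Δ = Δ_A ∪ Δ_B` with `A ⊄ B` and `B ⊄ A`. -/
theorem binary_subfield_two_maximal_elements {m : ℕ} (hm : 1 ≤ m)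
    (hF : Fintype.card F = 4) (w : F) (hw : w ^ 2 + w + 1 = 0)
    (π₁ π₂ : F → ZMod 2) (hπ : ∀ g : F, g = e2 (π₁ g) + w * e2 (π₂ g))
    (A B : Finset (Fin m)) (hA : ¬ A ⊆ B) (hB : ¬ B ⊆ A)
    (a b c s t u : ℕ) (ha : a = A.card) (hb : b = B.card) (hc : c = (A ∩ B).card)
    (hs : s = (A \ B).card) (ht : t = (B \ A).card) (hu : u = (A ∪ B).card)
    (N : ℚ) (hN : N = 2 ^ a + 2 ^ b - 2 ^ c) :
    ((((delta A ∪ delta B) ×ˢ (delta A ∪ delta B)).image (dvec w)).erase 0).card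
      = (2 ^ a + 2 ^ b - 2 ^ c) ^ 2 - 1
    ∧ (Finset.univ.image
        (fun ab : (Fin m → ZMod 2) × (Fin m → ZMod 2) =>
          cw2F ((((delta A ∪ delta B) ×ˢ (delta A ∪ delta B)).image (dvec w)).erase 0)
            π₁ π₂ ab.1 ab.2)).card
      = 4 ^ u
    ∧ (Finset.univ.val.map
        (fun ab : (Fin m → ZMod 2) × (Fin m → ZMod 2) =>
          (wt2F ((((delta A ∪ delta B) ×ˢ (delta A ∪ delta B)).image (dvec w)).erase 0)
            π₁ π₂ ab.1 ab.2 : ℚ)))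
      = Multiset.replicate (4 ^ (m - u)) 0
        + Multiset.replicate (2 * (2 ^ s - 1) * 4 ^ (m - u)) (2 ^ (a - 1) * N)
        + Multiset.replicate (2 * (2 ^ t - 1) * 4 ^ (m - u)) (2 ^ (b - 1) * N)
        + Multiset.replicate (2 * (2 ^ s - 1) * (2 ^ t - 1) * 4 ^ (m - u))
            ((2 ^ (a - 1) + 2 ^ (b - 1)) * N)
        + Multiset.replicate ((2 ^ t - 1) ^ 2 * 4 ^ (m - u))
            (2 ^ (b - 1) * (2 ^ (a + 1) + 2 ^ b - 2 ^ (c + 1)))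
        + Multiset.replicate ((2 ^ s - 1) ^ 2 * 4 ^ (m - u))
            (2 ^ (a - 1) * (2 ^ a + 2 ^ (b + 1) - 2 ^ (c + 1)))
        + Multiset.replicate ((2 ^ s - 1) ^ 2 * (2 ^ t - 1) ^ 2 * 4 ^ (m - u))
            ((2 ^ (a - 1) + 2 ^ (b - 1)) * (2 ^ a + 2 ^ b - 2 ^ (c + 1)))
        + Multiset.replicate (2 * (2 ^ s - 1) * (2 ^ t - 1) * 4 ^ (m - u))
            (1 / 2 * N ^ 2 - 1 / 2 * (2 ^ a - 2 ^ c) * (2 ^ b - 2 ^ c))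
        + Multiset.replicate (2 * (2 ^ s - 1) * (2 ^ t - 1) ^ 2 * 4 ^ (m - u))
            (1 / 2 * N ^ 2 + 1 / 2 * 2 ^ c * (2 ^ a - 2 ^ c))
        + Multiset.replicate (2 * (2 ^ s - 1) ^ 2 * (2 ^ t - 1) * 4 ^ (m - u))
            (1 / 2 * N ^ 2 + 1 / 2 * 2 ^ c * (2 ^ b - 2 ^ c))
        + Multiset.replicate ((4 ^ u - 4 ^ (s + t)) * 4 ^ (m - u)) (1 / 2 * N ^ 2) := by
  have hs0 : s + c = a := by rw [hs, hc, ha]; exact Finset.card_sdiff_add_card_inter A B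
  have ht0 : t + c = b := by
    rw [ht, hc, hb, Finset.inter_comm]; exact Finset.card_sdiff_add_card_inter B A
  have hu0 : u + c = a + b := by rw [hu, hc, ha, hb]; exact Finset.card_union_add_card_inter A B
  have hs1 : 1 ≤ s := by
    rw [hs, Nat.one_le_iff_ne_zero, Ne, Finset.card_eq_zero, Finset.sdiff_eq_empty_iff_subset]
    exact hA
  have ht1 : 1 ≤ t := by
    rw [ht, Nat.one_le_iff_ne_zero, Ne, Finset.card_eq_zero, Finset.sdiff_eq_empty_iff_subset]
    exact hB
  refine ⟨?_, ?_, ?_⟩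
  · rw [Finset.card_erase_of_mem, Finset.card_image_of_injective _ (dvec_inj hF w π₁ π₂ hπ),
      Finset.card_product, card_Delta, ← ha, ← hb, ← hc, sq]
    rw [← dvec_zero w]
    exact Finset.mem_image_of_mem _
      (Finset.mem_product.2 ⟨zero_mem_D A B, zero_mem_D A B⟩)
  · rw [card_codewords hF w π₁ π₂ hπ, hu]
  · apply multiset_eq_of_sums
    intro f
    simp only [wt_eq hF w π₁ π₂ hπ, ← ha, ← hb, ← hc, ← hN]
    rw [Multiset.map_map]
    have hL := sum_pairs (fun x y : Fin m → ZMod 2 =>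
      f (1 / 2 * (N ^ 2 - chi A B x * chi A B y)))
    have hL1 : ∀ x : Fin m → ZMod 2, _ := fun x =>
      sum_k_chi A B (fun z => f (1 / 2 * (N ^ 2 - chi A B x * z)))
    have hL2 := sum_k_chi A B (fun x => ∑ y, f (1 / 2 * (N ^ 2 - x * chi A B y)))
    have hL3 : ∀ x : ℚ, _ := fun x =>
      sum_k_chi A B (fun z => f (1 / 2 * (N ^ 2 - x * z)))
    rw [hL2] at hL
    simp only [hL3, ← ha, ← hb, ← hc, ← hs, ← ht, ← hu, ← hN] at hL
    refine Eq.trans hL ?_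
    clear hL hL1 hL2 hL3
    have p1 : ∀ n : ℕ, ((2 ^ n - 1 : ℕ) : ℚ) = 2 ^ n - 1 := by
      intro n
      rw [Nat.cast_sub Nat.one_le_two_pow]
      simp
    have p2 : ((4 ^ u - 4 ^ (s + t) : ℕ) : ℚ) = 4 ^ u - 4 ^ (s + t) := by
      rw [Nat.cast_sub (Nat.pow_le_pow_right (by norm_num) (by omega))]
      simp
    have q4 : ∀ n : ℕ, (4 : ℚ) ^ n = 2 ^ n * 2 ^ n := by
      intro n
      rw [← mul_pow]
      norm_num
    have ea : (2 : ℚ) ^ (a - 1) = 1 / 2 * 2 ^ a := by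
      obtain ⟨k, rfl⟩ : ∃ k, a = k + 1 := ⟨a - 1, by omega⟩
      rw [Nat.add_sub_cancel, pow_succ]
      ring
    have eb : (2 : ℚ) ^ (b - 1) = 1 / 2 * 2 ^ b := by
      obtain ⟨k, rfl⟩ : ∃ k, b = k + 1 := ⟨b - 1, by omega⟩
      rw [Nat.add_sub_cancel, pow_succ]
      ring
    simp only [Multiset.map_add, Multiset.sum_add, Multiset.map_replicate,
      Multiset.sum_replicate, nsmul_eq_mul, Nat.cast_mul, Nat.cast_pow, p1, p2, Nat.cast_ofNat,
      q4, ea, eb, pow_succ (2 : ℚ) a, pow_succ (2 : ℚ) b, pow_succ (2 : ℚ) c, pow_add (2 : ℚ) s t]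
    generalize (2 : ℚ) ^ a = x at *
    generalize (2 : ℚ) ^ b = y at *
    generalize (2 : ℚ) ^ c = z at *
    generalize (2 : ℚ) ^ s = S at *
    generalize (2 : ℚ) ^ t = T at *
    generalize (2 : ℚ) ^ u = V at *
    generalize (2 : ℚ) ^ (m - u) = K at *
    subst hN
    ring_nf
end
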